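/- arXiv:2510.02113 — 2 statements merged into one kernel-verified Lean document; each statement's English description precedes it below -/
import Mathlib

section
/- Let G be a DAG containing no active cycle, let X, Y, Z ⊆ V be disjoint with TRAILS(X,Y,Z) ≠ ∅, and let T be a minimal element of TRAILS(X,Y,Z) with respect to <_TRAIL, with converging nodes c_1, …, c_C. Then for every i = 1, …, C, the descendant path c_i → d^i_1 → ⋯ → d^i_{n_Z(i)} → Z(c_i) contains no chord and the trail t^i_1 ⇄ ⋯ ⇄ t^i_{n_t(i)} contains no chord; furthermore, the trails x ⇄ t^0_1 ⇄ ⋯ ⇄ t^0_{n_t(0)} and t^C_1 ⇄ ⋯ ⇄ t^C_{n_t(C)} ⇄ y contain no chord. -/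
open scoped Classical

/-- `E` is the arc relation of a (finite) directed acyclic graph: there are no
directed cycles (hence also no loops and no pairs of opposite arcs). -/
def IsDAG {V : Type*} (E : V → V → Prop) : Prop :=
  ∀ v : V, ¬ Relation.TransGen E v v

/-- `d` is a descendant of `v`: there is a (nonempty) directed path from `v` to `d`. -/
def Desc {V : Type*} (E : V → V → Prop) (v d : V) : Prop :=
  Relation.TransGen E v d

/-- A trail: a sequence of `len + 1` pairwise distinct nodes
`f 0, f 1, …, f len`, consecutive ones joined by an arc of `E`
in one of the two possible directions.  Its length is `len`. -/
structure Trail (V : Type*) (E : V → V → Prop) where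
  len : ℕ
  f : ℕ → V
  arcs : ∀ i, i < len → E (f i) (f (i + 1)) ∨ E (f (i + 1)) (f i)
  inj : ∀ i, i ≤ len → ∀ j, j ≤ len → f i = f j → i = j

namespace Trail

variable {V : Type*} {E : V → V → Prop}

/-- The trail has a converging connection at the interior index `i`:
`f (i-1) → f i ← f (i+1)`. -/
def ConvAt (T : Trail V E) (i : ℕ) : Prop :=
  0 < i ∧ i < T.len ∧ E (T.f (i - 1)) (T.f i) ∧ E (T.f (i + 1)) (T.f i)

/-- The trail is activated by `Z`: every interior converging node is in `Z` or has a
descendant in `Z`, and every interior non-converging node is not in `Z`. -/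
def ActivatedBy (T : Trail V E) (Z : Set V) : Prop :=
  ∀ i, 0 < i → i < T.len →
    (T.ConvAt i → (T.f i ∈ Z ∨ ∃ d ∈ Z, Desc E (T.f i) d)) ∧
    (¬ T.ConvAt i → T.f i ∉ Z)

/-- The trail has a chord: an arc of `E` between two non-consecutive nodes. -/
def HasChord (T : Trail V E) : Prop :=
  ∃ i j, i + 1 < j ∧ j ≤ T.len ∧ (E (T.f i) (T.f j) ∨ E (T.f j) (T.f i))

end Trail

/-- `E` contains an active cycle: a closed trail
`v ← x 0 ⇄ x 1 ⇄ ⋯ ⇄ x n ⇄ x (n+1) → v` (so `w = x 0` and `z = x (n+1)` are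
distinct parents of `v`), with `n ≥ 1`, such that the trail
`x 0 ⇄ ⋯ ⇄ x (n+1)` has no converging connection and the closed trail has no chords. -/
def HasActiveCycle {V : Type*} (E : V → V → Prop) : Prop :=
  ∃ (v : V) (n : ℕ) (x : ℕ → V),
    1 ≤ n ∧
    E (x 0) v ∧ E (x (n + 1)) v ∧
    (∀ i, i ≤ n + 1 → x i ≠ v) ∧
    (∀ i, i ≤ n + 1 → ∀ j, j ≤ n + 1 → x i = x j → i = j) ∧
    (∀ i, i < n + 1 → E (x i) (x (i + 1)) ∨ E (x (i + 1)) (x i)) ∧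
    (∀ i, 0 < i → i < n + 1 → ¬ (E (x (i - 1)) (x i) ∧ E (x (i + 1)) (x i))) ∧
    (∀ i j, i + 1 < j → j ≤ n + 1 → ¬ (i = 0 ∧ j = n + 1) →
      ¬ E (x i) (x j) ∧ ¬ E (x j) (x i)) ∧
    (∀ i, 1 ≤ i → i ≤ n → ¬ E v (x i) ∧ ¬ E (x i) v)

/-- A descendant path from `c` to `Z` with `n` intermediate nodes:
`c = d 0 → d 1 → ⋯ → d n → d (n+1) ∈ Z`, with `d j ∉ Z` for all `j ≤ n`. -/
def IsDescPath {V : Type*} (E : V → V → Prop) (Z : Set V) (c : V) (d : ℕ → V) (n : ℕ) :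
    Prop :=
  d 0 = c ∧ d (n + 1) ∈ Z ∧ (∀ j, j ≤ n → d j ∉ Z) ∧ (∀ j, j ≤ n → E (d j) (d (j + 1)))

/-- `n_Z(c)`: the least number of intermediate nodes of a descendant path from `c` to `Z`
(this is `0` when `c ∈ Z`, since then no descendant path exists and `sInf ∅ = 0`). -/
noncomputable def nZ {V : Type*} (E : V → V → Prop) (Z : Set V) (c : V) : ℕ :=
  sInf {n | ∃ d : ℕ → V, IsDescPath E Z c d n}

namespace Trail

variable {V : Type*} {E : V → V → Prop}

/-- The set of (interior) indices of `T` carrying a converging connection. -/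
noncomputable def convIdx (T : Trail V E) : Finset ℕ :=
  (Finset.Ioo 0 T.len).filter fun i => T.ConvAt i

/-- The weight vector `(|{c₁,…,c_C} \ Z|, C, Σᵢ n_Z(i), Σᵢ n_t(i))` of a trail,
whose lexicographic comparison induces the order `<_TRAIL`.  (The total length
of the subtrails, `Σᵢ n_t(i)`, equals `len - 1 - C`.) -/
noncomputable def weight (T : Trail V E) (Z : Set V) : ℕ × ℕ × ℕ × ℕ :=
  ((T.convIdx.filter fun i => T.f i ∉ Z).card,
   T.convIdx.card,
   ∑ i ∈ T.convIdx, nZ E Z (T.f i),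
   T.len - 1 - T.convIdx.card)

end Trail

/-- Strict lexicographic order on `ℕ × ℕ × ℕ × ℕ`. -/
def LexLt4 (a b : ℕ × ℕ × ℕ × ℕ) : Prop :=
  a.1 < b.1 ∨ (a.1 = b.1 ∧ (a.2.1 < b.2.1 ∨ (a.2.1 = b.2.1 ∧
    (a.2.2.1 < b.2.2.1 ∨ (a.2.2.1 = b.2.2.1 ∧ a.2.2.2 < b.2.2.2)))))

/-- `T ∈ TRAILS(X, Y, Z)`: `T` is a trail from a node of `X` to a node of `Y`
activated by `Z`. -/
def InTRAILS {V : Type*} {E : V → V → Prop} (T : Trail V E) (X Y Z : Set V) : Prop :=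
  T.f 0 ∈ X ∧ T.f T.len ∈ Y ∧ T.ActivatedBy Z

/-- `T` is a minimal element of `TRAILS(X, Y, Z)` with respect to `<_TRAIL`. -/
def MinimalTrail {V : Type*} {E : V → V → Prop} (T : Trail V E) (X Y Z : Set V) : Prop :=
  InTRAILS T X Y Z ∧
    ∀ T' : Trail V E, InTRAILS T' X Y Z → ¬ LexLt4 (T'.weight Z) (T.weight Z)

/-! A chord of a segment without converging connections can be followed instead of the nodes it
spans.  A converging connection created at an end of the chord would make the segment a directed
path away from that end, which the chord closes to a directed cycle.  So the shortened trail has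
the same converging nodes and is again activated; only the last entry of the weight changes, and
it drops, which contradicts minimality.  A chord of a descendant path either shortens the path or
closes a directed cycle. -/

/-- The increasing map on indices whose image leaves out the `k` indices
`p + 1, …, p + k`.  Composing a sequence of nodes with it replaces the piece from `p` to
`p + k + 1` by a single step. -/
def skipIndices (p k : ℕ) : ℕ ↪ ℕ where
  toFun i := if i ≤ p then i else i + k
  inj' i j h := by
    dsimp only at h
    split_ifs at h <;> omega

theorem skipIndices_of_le {p i : ℕ} (k : ℕ) (h : i ≤ p) : skipIndices p k i = i :=
  if_pos h

theorem skipIndices_of_lt {p i : ℕ} (k : ℕ) (h : p < i) : skipIndices p k i = i + k :=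
  if_neg h.not_ge

theorem le_skipIndices (p k i : ℕ) : i ≤ skipIndices p k i := by
  rcases le_or_gt i p with h | h
  · exact (skipIndices_of_le k h).ge
  · exact (skipIndices_of_lt k h).symm ▸ Nat.le_add_right i k

theorem skipIndices_le_add (p k i : ℕ) : skipIndices p k i ≤ i + k := by
  rcases le_or_gt i p with h | h
  · exact (skipIndices_of_le k h).symm ▸ Nat.le_add_right i k
  · exact (skipIndices_of_lt k h).le

theorem exists_skipIndices_eq {p k j : ℕ} (h : j ≤ p ∨ p + k < j) :
    ∃ i, skipIndices p k i = j := by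
  rcases h with h | h
  · exact ⟨j, skipIndices_of_le k h⟩
  · exact ⟨j - k, by rw [skipIndices_of_lt k (by omega)]; omega⟩

theorem rel_skipIndices_succ {V : Type*} {R : V → V → Prop} {f : ℕ → V} {m p k : ℕ}
    (hR : ∀ i < m, R (f i) (f (i + 1))) (hchord : R (f p) (f (p + k + 1))) {i : ℕ}
    (hi : i + k < m) : R (f (skipIndices p k i)) (f (skipIndices p k (i + 1))) := by
  rcases lt_trichotomy i p with h | rfl | h
  · rw [skipIndices_of_le k h.le, skipIndices_of_le k h]
    exact hR i (by omega)
  · rwa [skipIndices_of_le k le_rfl, skipIndices_of_lt k (Nat.lt_add_one _),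
      Nat.add_right_comm]
  · rw [skipIndices_of_lt k h, skipIndices_of_lt k (h.trans (Nat.lt_add_one _)),
      Nat.add_right_comm]
    exact hR (i + k) hi

namespace IsDescPath

variable {V : Type*} {E : V → V → Prop} {Z : Set V} {c : V} {d : ℕ → V} {n : ℕ}

theorem transGen (hd : IsDescPath E Z c d n) {p q : ℕ} (hpq : p < q) (hq : q ≤ n + 1) :
    Relation.TransGen E (d p) (d q) :=
  .lift d le_rfl _ _ <| transGen_of_succ_of_lt (Function.onFun E d)
    (fun i hi => hd.2.2.2 i (by have := hi.2; omega)) hpq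

theorem shortcut (hd : IsDescPath E Z c d n) {p k : ℕ} (hq : p + k ≤ n)
    (hchord : E (d p) (d (p + k + 1))) :
    IsDescPath E Z c (d ∘ skipIndices p k) (n - k) := by
  obtain ⟨hstart, hend, hnotMem, harcs⟩ := hd
  refine ⟨?_, ?_, fun j hj => hnotMem _ ?_, fun j hj =>
    rel_skipIndices_succ (m := n + 1) (fun i hi => harcs i (by omega)) hchord (by omega)⟩
  · rwa [Function.comp_apply, skipIndices_of_le k p.zero_le]
  · rwa [Function.comp_apply, skipIndices_of_lt k (by omega),
      show n - k + 1 + k = n + 1 by omega]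
  · have := skipIndices_le_add p k j
    omega

theorem not_arc_of_shortest (hd : IsDescPath E Z c d n) (hdag : IsDAG E)
    (hmin : ∀ (d' : ℕ → V) (n' : ℕ), IsDescPath E Z c d' n' → n ≤ n')
    {p q : ℕ} (hpq : p + 1 < q) (hq : q ≤ n + 1) : ¬ E (d p) (d q) ∧ ¬ E (d q) (d p) := by
  refine ⟨fun hchord => ?_, fun hchord =>
    hdag _ ((hd.transGen (Nat.lt_of_succ_lt hpq) hq).tail hchord)⟩
  obtain ⟨k, rfl⟩ : ∃ k, q = p + k + 1 := ⟨q - p - 1, by omega⟩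
  have := hmin _ _ (hd.shortcut (by omega) hchord)
  omega

end IsDescPath

namespace Trail

variable {V : Type*} {E : V → V → Prop} {T : Trail V E} {X Y Z : Set V} {p q k : ℕ}

theorem mem_convIdx {i : ℕ} : i ∈ T.convIdx ↔ T.ConvAt i := by
  simp only [convIdx, Finset.mem_filter, Finset.mem_Ioo, and_iff_right_iff_imp]
  exact fun h => ⟨h.1, h.2.1⟩

theorem card_convIdx_le (T : Trail V E) : T.convIdx.card ≤ T.len - 1 := by
  simpa only [convIdx, Nat.card_Ioo, Nat.sub_zero] using
    Finset.card_filter_le (Finset.Ioo 0 T.len) fun i => T.ConvAt i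

/-- The segment of `T` from index `p` to index `q` has no converging connection of `T`, its
two ends included. -/
def IsConvFree (T : Trail V E) (p q : ℕ) : Prop :=
  ∀ i ∈ Set.Icc p q, ¬ T.ConvAt i

theorem IsConvFree.mono_left (h : T.IsConvFree p q) {p' : ℕ} (hp : p ≤ p') :
    T.IsConvFree p' q :=
  fun i hi => h i ⟨hp.trans hi.1, hi.2⟩

theorem IsConvFree.arc_forward (h : T.IsConvFree (p + 1) q) (hq : q ≤ T.len)
    (hp : E (T.f p) (T.f (p + 1))) {i : ℕ} (hpi : p ≤ i) (hiq : i < q) :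
    E (T.f i) (T.f (i + 1)) := by
  induction i, hpi using Nat.le_induction with
  | base => exact hp
  | succ i hpi ih =>
    exact (T.arcs (i + 1) (hiq.trans_le hq)).resolve_right fun hback =>
      h (i + 1) ⟨by omega, hiq.le⟩
        ⟨i.succ_pos, hiq.trans_le hq, ih (Nat.lt_of_succ_lt hiq), hback⟩

theorem IsConvFree.arc_backward (h : T.IsConvFree (p + 1) q) (hq : q < T.len)
    (hin : E (T.f (q + 1)) (T.f q)) {i : ℕ} (hpi : p ≤ i) (hiq : i < q) :
    E (T.f (i + 1)) (T.f i) := by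
  refine (T.arcs i (hiq.trans hq)).resolve_left fun hi => ?_
  have harc : E (T.f (q - 1)) (T.f (q - 1 + 1)) :=
    (h.mono_left (Nat.succ_le_succ hpi)).arc_forward hq.le hi (by omega) (by omega)
  rw [show q - 1 + 1 = q by omega] at harc
  exact h q ⟨by omega, le_rfl⟩ ⟨by omega, hq, harc, hin⟩

theorem IsConvFree.transGen_forward (h : T.IsConvFree p q) (hpq : p < q) (hq : q ≤ T.len)
    (hp : 0 < p) (hin : E (T.f (p - 1)) (T.f p)) :
    Relation.TransGen E (T.f p) (T.f q) := by
  obtain ⟨p, rfl⟩ := Nat.exists_eq_add_one.2 hp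
  exact .lift T.f le_rfl _ _ <| transGen_of_succ_of_lt (Function.onFun E T.f)
    (fun i hi => h.arc_forward hq hin (Nat.le_of_succ_le hi.1) hi.2) hpq

theorem IsConvFree.transGen_backward (h : T.IsConvFree p q) (hpq : p < q) (hq : q < T.len)
    (hin : E (T.f (q + 1)) (T.f q)) : Relation.TransGen E (T.f q) (T.f p) :=
  .lift T.f le_rfl _ _ <| transGen_of_succ_of_gt (Function.onFun E T.f)
    (fun _ hi => (h.mono_left p.le_succ).arc_backward hq hin hi.1 hi.2) hpq

/-- The trail that follows a chord of `T` between the nodes of indices `p` and `p + k + 1`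
instead of the `k` nodes of `T` between them. -/
def shortcut (T : Trail V E) (p k : ℕ) (hlen : p + k + 1 ≤ T.len)
    (hchord : E (T.f p) (T.f (p + k + 1)) ∨ E (T.f (p + k + 1)) (T.f p)) : Trail V E where
  len := T.len - k
  f := T.f ∘ skipIndices p k
  arcs i hi := rel_skipIndices_succ (R := fun u v => E u v ∨ E v u) T.arcs hchord
    (Nat.add_lt_of_lt_sub hi)
  inj i hi j hj h := by
    have hle {l : ℕ} (hl : l ≤ T.len - k) : skipIndices p k l ≤ T.len :=
      (skipIndices_le_add p k l).trans (by omega)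
    exact (skipIndices p k).injective (T.inj _ (hle hi) _ (hle hj) h)

section Shortcut

variable {hlen : p + k + 1 ≤ T.len}
  {hchord : E (T.f p) (T.f (p + k + 1)) ∨ E (T.f (p + k + 1)) (T.f p)}

theorem shortcut_f_of_le {i : ℕ} (h : i ≤ p) : (T.shortcut p k hlen hchord).f i = T.f i :=
  congrArg T.f (skipIndices_of_le k h)

theorem shortcut_f_of_lt {i : ℕ} (h : p < i) :
    (T.shortcut p k hlen hchord).f i = T.f (i + k) :=
  congrArg T.f (skipIndices_of_lt k h)

theorem shortcut_f_len :
    (T.shortcut p k hlen hchord).f (T.shortcut p k hlen hchord).len = T.f T.len := by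
  have hlen' : (T.shortcut p k hlen hchord).len = T.len - k := rfl
  rw [hlen', shortcut_f_of_lt (by omega), Nat.sub_add_cancel (by omega)]

theorem convAt_shortcut_iff_of_lt {i : ℕ} (h : i < p) :
    (T.shortcut p k hlen hchord).ConvAt i ↔ T.ConvAt i := by
  have hlt : i < (T.shortcut p k hlen hchord).len ↔ i < T.len :=
    iff_of_true (show i < T.len - k by omega) (by omega)
  rw [ConvAt, ConvAt, hlt, shortcut_f_of_le h.le, shortcut_f_of_le h,
    shortcut_f_of_le ((i.sub_le 1).trans h.le)]

theorem convAt_shortcut_iff_of_gt {i : ℕ} (h : p + 1 < i) :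
    (T.shortcut p k hlen hchord).ConvAt i ↔ T.ConvAt (i + k) := by
  have hlt : i < (T.shortcut p k hlen hchord).len ↔ i + k < T.len := Nat.lt_sub_iff_add_lt
  have hpos : 0 < i ↔ 0 < i + k := by omega
  rw [ConvAt, ConvAt, hlt, hpos, shortcut_f_of_lt (i := i) (by omega),
    shortcut_f_of_lt (i := i - 1) (by omega), shortcut_f_of_lt (i := i + 1) (by omega),
    show i - 1 + k = i + k - 1 by omega, Nat.add_right_comm]

theorem not_convAt_shortcut_left (hdag : IsDAG E) (h : T.IsConvFree p (p + k + 1)) :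
    ¬ (T.shortcut p k hlen hchord).ConvAt p := by
  rintro ⟨hp, -, hin, hback⟩
  rw [shortcut_f_of_le le_rfl, shortcut_f_of_le (p.sub_le 1)] at hin
  rw [shortcut_f_of_le le_rfl, shortcut_f_of_lt (Nat.lt_add_one _), Nat.add_right_comm] at hback
  exact hdag _ ((h.transGen_forward (by omega) hlen hp hin).tail hback)

theorem not_convAt_shortcut_right (hdag : IsDAG E) (h : T.IsConvFree p (p + k + 1)) :
    ¬ (T.shortcut p k hlen hchord).ConvAt (p + 1) := by
  rintro ⟨-, hlt, hforth, hin⟩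
  rw [shortcut_f_of_lt (Nat.lt_add_one p), Nat.add_right_comm p 1 k] at hforth hin
  rw [Nat.add_sub_cancel, shortcut_f_of_le le_rfl] at hforth
  rw [shortcut_f_of_lt (by omega), show p + 1 + 1 + k = p + k + 1 + 1 by omega] at hin
  have hq : p + k + 1 < T.len := by
    have : p + 1 < T.len - k := hlt
    omega
  exact hdag _ ((h.transGen_backward (by omega) hq hin).tail hforth)

theorem convAt_shortcut_iff (hdag : IsDAG E) (h : T.IsConvFree p (p + k + 1)) (i : ℕ) :
    (T.shortcut p k hlen hchord).ConvAt i ↔ T.ConvAt (skipIndices p k i) := by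
  obtain hip | rfl | rfl | hip : i < p ∨ i = p ∨ i = p + 1 ∨ p + 1 < i := by omega
  · rw [convAt_shortcut_iff_of_lt hip, skipIndices_of_le k hip.le]
  · rw [skipIndices_of_le k le_rfl]
    exact iff_of_false (not_convAt_shortcut_left hdag h) (h i ⟨le_rfl, by omega⟩)
  · rw [skipIndices_of_lt k (Nat.lt_add_one _)]
    exact iff_of_false (not_convAt_shortcut_right hdag h) (h _ ⟨by omega, by omega⟩)
  · rw [convAt_shortcut_iff_of_gt hip, skipIndices_of_lt k (by omega)]

theorem map_skipIndices_convIdx_shortcut (hdag : IsDAG E)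
    (h : T.IsConvFree p (p + k + 1)) :
    (T.shortcut p k hlen hchord).convIdx.map (skipIndices p k) = T.convIdx := by
  ext j
  simp only [Finset.mem_map, mem_convIdx, convAt_shortcut_iff hdag h]
  refine ⟨by rintro ⟨i, hi, rfl⟩; exact hi, fun hj => ?_⟩
  have houtside : j ≤ p ∨ p + k < j := by
    by_contra! hinside
    exact h j ⟨hinside.1.le, by omega⟩ hj
  obtain ⟨i, rfl⟩ := exists_skipIndices_eq houtside
  exact ⟨i, hj, rfl⟩

theorem inTRAILS_shortcut (hdag : IsDAG E) (h : T.IsConvFree p (p + k + 1))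
    (hT : InTRAILS T X Y Z) : InTRAILS (T.shortcut p k hlen hchord) X Y Z := by
  obtain ⟨hX, hY, hactive⟩ := hT
  refine ⟨by rwa [shortcut_f_of_le p.zero_le], by rwa [shortcut_f_len], fun i hpos hlt => ?_⟩
  rw [convAt_shortcut_iff hdag h]
  exact hactive _ (hpos.trans_le (le_skipIndices p k i))
    ((skipIndices_le_add p k i).trans_lt (Nat.add_lt_of_lt_sub hlt))

theorem weight_shortcut_lt (Z : Set V) (hdag : IsDAG E) (h : T.IsConvFree p (p + k + 1))
    (hk : 0 < k) : LexLt4 ((T.shortcut p k hlen hchord).weight Z) (T.weight Z) := by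
  have hmap := map_skipIndices_convIdx_shortcut (hlen := hlen) (hchord := hchord) hdag h
  have hcard : (T.shortcut p k hlen hchord).convIdx.card = T.convIdx.card := by
    rw [← hmap, Finset.card_map]
  refine Or.inr ⟨?_, Or.inr ⟨hcard, Or.inr ⟨?_, ?_⟩⟩⟩
  · simp only [weight, ← hmap, Finset.filter_map, Finset.card_map]
    rfl
  · simp only [weight, ← hmap, Finset.sum_map]
    rfl
  · have hle := card_convIdx_le (T.shortcut p k hlen hchord)
    have hlen' : (T.shortcut p k hlen hchord).len = T.len - k := rfl
    simp only [weight]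
    omega

end Shortcut

end Trail

theorem MinimalTrail.not_arc_of_isConvFree {V : Type*} {E : V → V → Prop} {X Y Z : Set V}
    {T : Trail V E} (hT : MinimalTrail T X Y Z) (hdag : IsDAG E) {p q : ℕ} (hpq : p + 1 < q)
    (hq : q ≤ T.len) (h : T.IsConvFree p q) :
    ¬ E (T.f p) (T.f q) ∧ ¬ E (T.f q) (T.f p) := by
  obtain ⟨k, rfl⟩ : ∃ k, q = p + k + 1 := ⟨q - p - 1, by omega⟩
  rw [← not_or]
  intro hchord
  exact hT.2 (T.shortcut p k hq hchord) (Trail.inTRAILS_shortcut hdag h hT.1)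
    (Trail.weight_shortcut_lt Z hdag h (by omega))

theorem minimal_trail_no_chords_general
    {V : Type*} {E : V → V → Prop} (hdag : IsDAG E) {X Y Z : Set V}
    {T : Trail V E} (hT : MinimalTrail T X Y Z) :
    (∀ i, T.ConvAt i → ∀ (d : ℕ → V) (n : ℕ), IsDescPath E Z (T.f i) d n →
      (∀ (d' : ℕ → V) (n' : ℕ), IsDescPath E Z (T.f i) d' n' → n ≤ n') →
      ∀ p q, p + 1 < q → q ≤ n + 1 → ¬ E (d p) (d q) ∧ ¬ E (d q) (d p)) ∧
    (∀ a b, T.ConvAt a → T.ConvAt b → a < b →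
      (∀ i, a < i → i < b → ¬ T.ConvAt i) →
      ∀ p q, a < p → p + 1 < q → q < b →
        ¬ E (T.f p) (T.f q) ∧ ¬ E (T.f q) (T.f p)) ∧
    (∀ b, b ≤ T.len → (T.ConvAt b ∨ b = T.len) → (∀ i, i < b → ¬ T.ConvAt i) →
      ∀ p q, p + 1 < q → q < b → ¬ E (T.f p) (T.f q) ∧ ¬ E (T.f q) (T.f p)) ∧
    (∀ a, (T.ConvAt a ∨ a = 0) → (∀ i, a < i → i < T.len → ¬ T.ConvAt i) →
      ∀ p q, a < p → p + 1 < q → q ≤ T.len →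
        ¬ E (T.f p) (T.f q) ∧ ¬ E (T.f q) (T.f p)) := by
  refine ⟨fun i _ d n hd hmin p q => hd.not_arc_of_shortest hdag hmin, ?_, ?_, ?_⟩
  · intro a b _ hb _ hfree p q hap hpq hqb
    exact hT.not_arc_of_isConvFree hdag hpq (hqb.trans hb.2.1).le
      fun i hi => hfree i (hap.trans_le hi.1) (hi.2.trans_lt hqb)
  · intro b hb _ hfree p q hpq hqb
    exact hT.not_arc_of_isConvFree hdag hpq (hqb.le.trans hb)
      fun i hi => hfree i (hi.2.trans_lt hqb)
  · intro a _ hfree p q hap hpq hq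
    exact hT.not_arc_of_isConvFree hdag hpq hq
      fun i hi hconv => hfree i (hap.trans_le hi.1) hconv.2.1 hconv

/-- For a minimal trail `T` of `TRAILS(X,Y,Z)`: the (shortest)
descendant paths contain no chord; the interior of each subtrail between two
consecutive converging nodes contains no chord; and the initial segment
`x ⇄ t⁰₁ ⇄ ⋯ ⇄ t⁰ₙ` as well as the final segment `tᶜ₁ ⇄ ⋯ ⇄ tᶜₙ ⇄ y`
contain no chord. -/
theorem minimal_trail_no_chords
    {V : Type*} [Fintype V] (E : V → V → Prop) (hdag : IsDAG E)
    (hnac : ¬ HasActiveCycle E) (X Y Z : Set V)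
    (hXY : Disjoint X Y) (hXZ : Disjoint X Z) (hYZ : Disjoint Y Z)
    (hne : ∃ T₀ : Trail V E, InTRAILS T₀ X Y Z)
    (T : Trail V E) (hT : MinimalTrail T X Y Z) :
    (∀ i, T.ConvAt i → ∀ (d : ℕ → V) (n : ℕ), IsDescPath E Z (T.f i) d n →
      (∀ (d' : ℕ → V) (n' : ℕ), IsDescPath E Z (T.f i) d' n' → n ≤ n') →
      ∀ p q, p + 1 < q → q ≤ n + 1 → ¬ E (d p) (d q) ∧ ¬ E (d q) (d p)) ∧
    (∀ a b, T.ConvAt a → T.ConvAt b → a < b →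
      (∀ i, a < i → i < b → ¬ T.ConvAt i) →
      ∀ p q, a < p → p + 1 < q → q < b →
        ¬ E (T.f p) (T.f q) ∧ ¬ E (T.f q) (T.f p)) ∧
    (∀ b, b ≤ T.len → (T.ConvAt b ∨ b = T.len) → (∀ i, i < b → ¬ T.ConvAt i) →
      ∀ p q, p + 1 < q → q < b → ¬ E (T.f p) (T.f q) ∧ ¬ E (T.f q) (T.f p)) ∧
    (∀ a, (T.ConvAt a ∨ a = 0) → (∀ i, a < i → i < T.len → ¬ T.ConvAt i) →
      ∀ p q, a < p → p + 1 < q → q ≤ T.len →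
        ¬ E (T.f p) (T.f q) ∧ ¬ E (T.f q) (T.f p)) :=
  minimal_trail_no_chords_general hdag hT
end

section
/- Let G be a DAG and K ⊆ V. The set K has local relationships if and only if there exists a partition K = K_1 ⊔ ⋯ ⊔ K_k such that each part K_i is connected and has local relationships, and for all i ≠ j, K_i and K_j are d-separated by the empty set. -/
open scoped Classical

/-- `K` has local relationships: whenever two nodes of `K` are joined by a trail with
no converging connection all of whose interior nodes avoid `K`, they are adjacent. -/
def LocalRel {V : Type*} (E : V → V → Prop) (K : Set V) : Prop :=
  ∀ T : Trail V E, 1 ≤ T.len → T.f 0 ∈ K → T.f T.len ∈ K →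
    (∀ i, 0 < i → i < T.len → T.f i ∉ K) →
    (∀ i, 0 < i → i < T.len → ¬ T.ConvAt i) →
    E (T.f 0) (T.f T.len) ∨ E (T.f T.len) (T.f 0)

/-- `S` d-separates `A` and `B`: every trail from a node of `A` to a node of `B`
is blocked by (i.e. not activated by) `S`. -/
def DSep {V : Type*} (E : V → V → Prop) (A B S : Set V) : Prop :=
  ∀ T : Trail V E, T.f 0 ∈ A → T.f T.len ∈ B → ¬ T.ActivatedBy S

/-- `S` is connected: any two distinct nodes of `S` are joined by a trail all of
whose nodes lie in `S`. -/
def ConnectedIn {V : Type*} (E : V → V → Prop) (S : Set V) : Prop :=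
  ∀ v1 ∈ S, ∀ v2 ∈ S, v1 ≠ v2 → ∃ T : Trail V E,
    T.f 0 = v1 ∧ T.f T.len = v2 ∧ ∀ i, i ≤ T.len → T.f i ∈ S

/-
Idea: two nodes of `K` at the ends of a trail without converging connections lie in the same
component of `K`. If the trail meets `K` only at its ends, its ends are adjacent, since `K` has
local relationships; otherwise cut it at an interior node in `K` and treat both shorter pieces in
the same way. Hence the connected components of `K` are pairwise d-separated by `∅`, and each one
inherits the local relationships of `K`. Conversely, d-separation forces such a trail to begin and
end in the same part of a partition, where the local relationships of that part apply.
-/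

universe u

namespace Trail

variable {V : Type*} {E : V → V → Prop} {Z : Set V}

/-- The initial piece `f 0, …, f m` of a trail, used to cut a trail at one of its nodes. -/
def take (T : Trail V E) (m : ℕ) (hm : m ≤ T.len) : Trail V E where
  len := m
  f := T.f
  arcs i hi := T.arcs i (hi.trans_le hm)
  inj i hi j hj := T.inj i (hi.trans hm) j (hj.trans hm)

/-- The final piece `f m, …, f len` of a trail, used to cut a trail at one of its nodes. -/
def drop (T : Trail V E) (m : ℕ) (hm : m ≤ T.len) : Trail V E where
  len := T.len - m
  f i := T.f (m + i)
  arcs i hi := T.arcs (m + i) (by omega)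
  inj i hi j hj h := Nat.add_left_cancel (T.inj (m + i) (by omega) (m + j) (by omega) h)

theorem drop_f_len (T : Trail V E) {m : ℕ} (hm : m ≤ T.len) :
    (T.drop m hm).f (T.drop m hm).len = T.f T.len :=
  congrArg T.f (Nat.add_sub_of_le hm)

theorem convAt_take_iff (T : Trail V E) {m i : ℕ} (hm : m ≤ T.len) (hi : i < m) :
    (T.take m hm).ConvAt i ↔ T.ConvAt i := by
  simp only [ConvAt, take, hi, hi.trans_le hm]

theorem convAt_drop_iff (T : Trail V E) {m i : ℕ} (hm : m ≤ T.len) (hi : 0 < i) :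
    (T.drop m hm).ConvAt i ↔ T.ConvAt (m + i) := by
  simp only [ConvAt, drop, Nat.add_sub_assoc hi, Nat.lt_sub_iff_add_lt', hi, Nat.add_pos_right m hi,
    add_assoc]

theorem ActivatedBy.take {T : Trail V E} (hT : T.ActivatedBy Z) {m : ℕ} (hm : m ≤ T.len) :
    (T.take m hm).ActivatedBy Z := fun i hi0 hi => by
  rw [T.convAt_take_iff hm hi]
  exact hT i hi0 (hi.trans_le hm)

theorem ActivatedBy.drop {T : Trail V E} (hT : T.ActivatedBy Z) {m : ℕ} (hm : m ≤ T.len) :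
    (T.drop m hm).ActivatedBy Z := fun i hi0 hi => by
  rw [T.convAt_drop_iff hm hi0]
  exact hT (m + i) (Nat.add_pos_right m hi0) (Nat.add_lt_of_lt_sub' hi)

theorem activatedBy_empty_iff {T : Trail V E} :
    T.ActivatedBy ∅ ↔ ∀ i, 0 < i → i < T.len → ¬ T.ConvAt i := by
  simp [ActivatedBy]

theorem f_zero_ne_f_len (T : Trail V E) (hT : 0 < T.len) : T.f 0 ≠ T.f T.len :=
  fun h => hT.ne (T.inj 0 (Nat.zero_le _) T.len le_rfl h)

end Trail

section Components

variable {V : Type*} {E : V → V → Prop} {K : Set V}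

/-- The undirected graph on `K` given by the arcs of `E` between nodes of `K`. Its connected
components are the parts of the partition of `K`. -/
def inducedSkeleton (E : V → V → Prop) (K : Set V) : SimpleGraph K :=
  (SimpleGraph.fromRel E).induce K

theorem inducedSkeleton_adj {v w : K} :
    (inducedSkeleton E K).Adj v w ↔ (v : V) ≠ w ∧ (E v w ∨ E w v) :=
  Iff.rfl

/-- A path between nodes of `K` in the undirected graph on `K`, as a trail in `E`. -/
def Trail.ofIsPath {v w : K} {p : (inducedSkeleton E K).Walk v w} (hp : p.IsPath) : Trail V E where
  len := p.length
  f i := p.getVert i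
  arcs _ hi := (inducedSkeleton_adj.1 (p.adj_getVert_succ hi)).2
  inj _ hi _ hj h := hp.getVert_injOn hi hj (Subtype.ext h)

/-- The nodes of a component of `K`, as a set of nodes of the whole graph. -/
def componentNodes (c : (inducedSkeleton E K).ConnectedComponent) : Set V :=
  (↑) '' c.supp

theorem mem_componentNodes {c : (inducedSkeleton E K).ConnectedComponent} {v : V} :
    v ∈ componentNodes c ↔
      ∃ hv : v ∈ K, (inducedSkeleton E K).connectedComponentMk ⟨v, hv⟩ = c := by
  simp [componentNodes]

theorem componentNodes_nonempty (c : (inducedSkeleton E K).ConnectedComponent) :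
    (componentNodes c).Nonempty :=
  c.nonempty_supp.image _

theorem pairwise_disjoint_componentNodes :
    Pairwise fun c c' : (inducedSkeleton E K).ConnectedComponent =>
      Disjoint (componentNodes c) (componentNodes c') := fun _ _ hcc' =>
  Set.disjoint_image_of_injective Subtype.val_injective
    (SimpleGraph.pairwise_disjoint_supp_connectedComponent _ hcc')

theorem iUnion_componentNodes :
    ⋃ c : (inducedSkeleton E K).ConnectedComponent, componentNodes c = K := by
  simp only [componentNodes, ← Set.image_iUnion, SimpleGraph.iUnion_connectedComponentSupp,
    Set.image_univ, Subtype.range_coe]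

theorem connectedIn_componentNodes (c : (inducedSkeleton E K).ConnectedComponent) :
    ConnectedIn E (componentNodes c) := by
  rintro _ ⟨v, hv, rfl⟩ _ ⟨w, hw, rfl⟩ -
  obtain ⟨p, hp⟩ := (c.reachable_of_mem_supp hv hw).exists_isPath
  refine ⟨.ofIsPath hp, congrArg Subtype.val p.getVert_zero,
    congrArg Subtype.val p.getVert_length, fun i _ => ?_⟩
  have hreach : (inducedSkeleton E K).Reachable v (p.getVert i) := ⟨p.take i⟩
  exact ⟨p.getVert i, (SimpleGraph.ConnectedComponent.sound hreach.symm).trans hv, rfl⟩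

end Components

namespace LocalRel

variable {V : Type*} {E : V → V → Prop} {K : Set V}

theorem reachable_of_activatedBy_empty (hK : LocalRel E K) (T : Trail V E)
    (hT : T.ActivatedBy ∅) {v w : K} (hv : T.f 0 = v) (hw : T.f T.len = w) :
    (inducedSkeleton E K).Reachable v w := by
  induction hn : T.len using Nat.strong_induction_on generalizing T v w with
  | _ n ih =>
    subst hn
    rcases T.len.eq_zero_or_pos with hlen | hlen
    · obtain rfl : v = w := Subtype.ext (by rw [← hv, ← hw, hlen])
      exact .rfl
    by_cases hint : ∃ m, 0 < m ∧ m < T.len ∧ T.f m ∈ K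
    · obtain ⟨m, hm0, hm, hmK⟩ := hint
      have hfirst : (inducedSkeleton E K).Reachable v ⟨T.f m, hmK⟩ :=
        ih m hm (T.take m hm.le) (hT.take hm.le) hv rfl rfl
      have hlast : (inducedSkeleton E K).Reachable ⟨T.f m, hmK⟩ w :=
        ih (T.len - m) (Nat.sub_lt hlen hm0) (T.drop m hm.le) (hT.drop hm.le) rfl
          ((T.drop_f_len hm.le).trans hw) rfl
      exact hfirst.trans hlast
    · push Not at hint
      have hadj := hK T hlen (hv ▸ v.2) (hw ▸ w.2) hint (Trail.activatedBy_empty_iff.1 hT)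
      have hne := T.f_zero_ne_f_len hlen
      rw [hv, hw] at hadj hne
      exact (inducedSkeleton_adj.2 ⟨hne, hadj⟩).reachable

theorem eq_of_activatedBy_empty (hK : LocalRel E K) {T : Trail V E} (hT : T.ActivatedBy ∅)
    {c c' : (inducedSkeleton E K).ConnectedComponent} (h0 : T.f 0 ∈ componentNodes c)
    (h1 : T.f T.len ∈ componentNodes c') : c = c' := by
  obtain ⟨h0K, rfl⟩ := mem_componentNodes.1 h0
  obtain ⟨h1K, rfl⟩ := mem_componentNodes.1 h1
  exact SimpleGraph.ConnectedComponent.sound (hK.reachable_of_activatedBy_empty T hT rfl rfl)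

theorem pairwise_dSep_componentNodes (hK : LocalRel E K) :
    Pairwise fun c c' : (inducedSkeleton E K).ConnectedComponent =>
      DSep E (componentNodes c) (componentNodes c') ∅ :=
  fun _ _ hcc' _ h0 h1 hT => hcc' (hK.eq_of_activatedBy_empty hT h0 h1)

theorem localRel_componentNodes (hK : LocalRel E K) (c : (inducedSkeleton E K).ConnectedComponent) :
    LocalRel E (componentNodes c) := by
  intro T hlen h0 h1 hint hconv
  have hT : T.ActivatedBy ∅ := Trail.activatedBy_empty_iff.2 hconv
  refine hK T hlen (mem_componentNodes.1 h0).1 (mem_componentNodes.1 h1).1 ?_ hconv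
  intro m hm0 hm hmK
  have hmc : T.f m ∈ componentNodes ((inducedSkeleton E K).connectedComponentMk ⟨_, hmK⟩) :=
    mem_componentNodes.2 ⟨hmK, rfl⟩
  have hc := hK.eq_of_activatedBy_empty (hT.take hm.le) h0 hmc
  exact hint m hm0 hm (hc ▸ hmc)

end LocalRel

theorem localRel_iUnion {V : Type*} {E : V → V → Prop} {ι : Type*} {P : ι → Set V}
    (hP : ∀ i, LocalRel E (P i)) (hsep : Pairwise fun i j => DSep E (P i) (P j) ∅) :
    LocalRel E (⋃ i, P i) := by
  intro T hlen h0 h1 hint hconv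
  obtain ⟨i, hi⟩ := Set.mem_iUnion.1 h0
  obtain ⟨j, hj⟩ := Set.mem_iUnion.1 h1
  obtain rfl : i = j := by
    by_contra hij
    exact hsep hij T hi hj (Trail.activatedBy_empty_iff.2 hconv)
  exact hP i T hlen hi hj
    (fun m hm0 hm hmi => hint m hm0 hm (Set.mem_iUnion_of_mem i hmi)) hconv

/-- `P` is a partition of `K` into connected parts with local relationships that are pairwise
d-separated by `∅`. The index type is arbitrary, so that there may be infinitely many parts. -/
def IsLocalPartition {V ι : Type*} (E : V → V → Prop) (K : Set V) (P : ι → Set V) : Prop :=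
  (∀ i, (P i).Nonempty) ∧
  Pairwise (Function.onFun Disjoint P) ∧
  (⋃ i, P i) = K ∧
  (∀ i, ConnectedIn E (P i) ∧ LocalRel E (P i)) ∧
  Pairwise fun i j => DSep E (P i) (P j) ∅

theorem IsLocalPartition.comp_equiv {V ι κ : Type*} {E : V → V → Prop} {K : Set V}
    {P : ι → Set V} (hP : IsLocalPartition E K P) (e : κ ≃ ι) :
    IsLocalPartition E K (P ∘ e) := by
  obtain ⟨hne, hdisj, hunion, hparts, hsep⟩ := hP
  exact ⟨fun i => hne (e i), hdisj.comp_of_injective e.injective,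
    (e.surjective.iUnion_comp P).trans hunion, fun i => hparts (e i),
    hsep.comp_of_injective e.injective⟩

theorem injective_of_pairwise_disjoint_of_nonempty {V ι : Type*} {P : ι → Set V}
    (hdisj : Pairwise (Function.onFun Disjoint P)) (hne : ∀ i, (P i).Nonempty) :
    Function.Injective P := by
  intro i j hij
  obtain ⟨v, hv⟩ := hne i
  exact hdisj.eq (Set.not_disjoint_iff.2 ⟨v, hv, hij ▸ hv⟩)

theorem LocalRel.isLocalPartition_componentNodes {V : Type*} {E : V → V → Prop} {K : Set V}
    (hK : LocalRel E K) :
    IsLocalPartition E K fun c : (inducedSkeleton E K).ConnectedComponent => componentNodes c :=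
  ⟨componentNodes_nonempty, pairwise_disjoint_componentNodes, iUnion_componentNodes,
    fun c => ⟨connectedIn_componentNodes c, hK.localRel_componentNodes c⟩,
    hK.pairwise_dSep_componentNodes⟩

theorem exists_isLocalPartition_iff_exists_fin {V : Type u} [Finite V] {E : V → V → Prop}
    {K : Set V} :
    (∃ (ι : Type u) (P : ι → Set V), IsLocalPartition E K P) ↔
      ∃ (k : ℕ) (P : Fin k → Set V), IsLocalPartition E K P := by
  constructor
  · rintro ⟨ι, P, hP⟩
    have : Finite ι := .of_injective P
      (injective_of_pairwise_disjoint_of_nonempty hP.2.1 hP.1)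
    exact ⟨_, _, hP.comp_equiv (Finite.equivFin ι).symm⟩
  · rintro ⟨k, P, hP⟩
    exact ⟨ULift (Fin k), _, hP.comp_equiv Equiv.ulift⟩

theorem localRel_iff_partition_general {V : Type u} (E : V → V → Prop) (K : Set V) :
    LocalRel E K ↔ ∃ (ι : Type u) (P : ι → Set V), IsLocalPartition E K P := by
  constructor
  · exact fun hK => ⟨_, _, hK.isLocalPartition_componentNodes⟩
  · rintro ⟨ι, P, -, -, rfl, hP, hsep⟩
    exact localRel_iUnion (fun i => (hP i).2) hsep

/-- A set `K` has local relationships if and only if it admits a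
partition into parts that are each connected with local relationships and pairwise
d-separated by the empty set. -/
theorem localRel_iff_partition
    {V : Type*} [Fintype V] (E : V → V → Prop) (hdag : IsDAG E) (K : Set V) :
    LocalRel E K ↔ ∃ (k : ℕ) (P : Fin k → Set V),
      (∀ i, (P i).Nonempty) ∧
      (∀ i j, i ≠ j → Disjoint (P i) (P j)) ∧
      (⋃ i, P i) = K ∧
      (∀ i, ConnectedIn E (P i) ∧ LocalRel E (P i)) ∧
      (∀ i j, i ≠ j → DSep E (P i) (P j) ∅) :=
  (localRel_iff_partition_general E K).trans exists_isLocalPartition_iff_exists_fin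
end
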